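/- Let α and β be real numbers with α > 0, β > 0 and α + β < 2, and set σ = αβ(α+β)/4. For real y > 2, define F(y) as the value of the continued fraction b_0(y) + K_{m=1}^∞(a_m/b_m(y)), where b_0(y) = y²−1−σ and for m ≥ 1: a_{2m} = (2m+α)(2m−α−β)(2m+β)/4, a_{2m−1} = (2m−α)(2m+α+β)(2m−β)/4, b_{2m}(y) = (y²−1)(2m+1), b_{2m−1}(y) = 1; and define Q(y) = (F(y)−σ)/(F(y)+σ). Then for every real x > 2, the continued fractions defining F(x) and F(x+2) converge, F(x)+σ ≠ 0, F(x+2)+σ ≠ 0, and Q(x) = [(x+1+α)(x+1−α−β)(x+1+β) / ((x+1−α)(x+1+α+β)(x+1−β))]·Q(x+2). -/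

import Mathlib

open Filter

noncomputable def cfA (a b : ℕ → ℝ) : ℕ → ℝ
  | 0 => 1
  | 1 => b 0
  | n + 2 => b (n + 1) * cfA a b (n + 1) + a (n + 1) * cfA a b n

noncomputable def cfB (a b : ℕ → ℝ) : ℕ → ℝ
  | 0 => 0
  | 1 => 1
  | n + 2 => b (n + 1) * cfB a b (n + 1) + a (n + 1) * cfB a b n

/-- The continued fraction `b 0 + K_{n=1}^∞ (a n / b n)` converges to `v`. -/
def CFConvergesTo (a b : ℕ → ℝ) (v : ℝ) : Prop :=
  (∀ᶠ n in atTop, cfB a b n ≠ 0) ∧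
    Tendsto (fun n => cfA a b n / cfB a b n) atTop (nhds v)
/-- `a_{2m} = (2m+α)(2m−α−β)(2m+β)/4`, `a_{2m−1} = (2m−α)(2m+α+β)(2m−β)/4`. -/
noncomputable def aSeq (α β : ℝ) : ℕ → ℝ := fun n =>
  if n % 2 = 0 then
    ((n : ℝ) + α) * ((n : ℝ) - α - β) * ((n : ℝ) + β) / 4
  else
    ((n : ℝ) + 1 - α) * ((n : ℝ) + 1 + α + β) * ((n : ℝ) + 1 - β) / 4

/-- `b_0(y) = y²−1−σ` with `σ = αβ(α+β)/4`, `b_{2m}(y) = (y²−1)(2m+1)`, `b_{2m−1}(y) = 1`. -/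
noncomputable def bSeq (α β : ℝ) (y : ℝ) : ℕ → ℝ := fun n =>
  if n = 0 then y ^ 2 - 1 - α * β * (α + β) / 4
  else if n % 2 = 0 then (y ^ 2 - 1) * ((n : ℝ) + 1) else 1

lemma cf_conv (a b : ℕ → ℝ) (ha : ∀ n, 0 < a (n+1)) (hb : ∀ n, 0 < b (n+1))
    (hk : ∀ n : ℕ, a (n+3) ≤ 4 * (b (n+2) * b (n+3) * ((n:ℝ)+2)^2)) :
    ∃ v, CFConvergesTo a b v ∧ b 0 ≤ v ∧ (∀ n, 0 < cfB a b (n+1)) := by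
  have hB : ∀ n, 0 < cfB a b (n+1) ∧ 0 < cfB a b (n+2) := by
    intro n
    induction n with
    | zero =>
      have := hb 0
      simp [cfB]
      simpa using this
    | succ n ih =>
      refine ⟨ih.2, ?_⟩
      rw [show n + 1 + 2 = (n+1) + 2 from rfl, cfB]
      have h1 := mul_pos (hb (n+1)) ih.2
      have h2 := mul_pos (ha (n+1)) ih.1
      linarith
  set P : ℕ → ℝ := fun n => ∏ i ∈ Finset.range n, a (i+1) with hPdef
  have hP : ∀ n, 0 < P n := fun n => Finset.prod_pos (fun i _ => ha i)
  have hPs : ∀ n, P (n+1) = P n * a (n+1) := fun n => Finset.prod_range_succ _ _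
  have hdet : ∀ n, cfA a b (n+2) * cfB a b (n+1) - cfA a b (n+1) * cfB a b (n+2)
      = (-1)^n * P (n+1) := by
    intro n
    induction n with
    | zero => simp [cfA, cfB, hPdef]; ring
    | succ n ih =>
      have eA : cfA a b (n+1+2) = b (n+1+1) * cfA a b (n+2) + a (n+1+1) * cfA a b (n+1) := by
        rw [cfA]
      have eB : cfB a b (n+1+2) = b (n+1+1) * cfB a b (n+2) + a (n+1+1) * cfB a b (n+1) := by
        rw [cfB]
      rw [eA, eB, hPs (n+1), pow_succ, show n + 1 + 1 = n + 2 from rfl]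
      rw [show n + 1 + 1 = n + 2 from rfl] at *
      linear_combination (-a (n+2)) * ih
  set D : ℕ → ℝ := fun n => cfB a b (n+1) * cfB a b (n+2) / P (n+1) with hD
  have hDpos : ∀ n, 0 < D n := fun n => div_pos (mul_pos (hB n).1 (hB n).2) (hP _)
  have hDs : ∀ n, D (n+1) = D n + b (n+2) * cfB a b (n+2)^2 / P (n+2) := by
    intro n
    simp only [hD]
    have eB : cfB a b (n+1+2) = b (n+2) * cfB a b (n+2) + a (n+2) * cfB a b (n+1) := by
      rw [cfB]
    rw [eB, hPs (n+1), show n + 1 + 1 = n + 2 from rfl]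
    have h1 := (hP (n+1)).ne'
    have h2 : a (n+2) ≠ 0 := (ha (n+1)).ne'
    field_simp
    ring
  have hDmono : Monotone D := monotone_nat_of_le_succ (fun n => by
    rw [hDs n]
    have : 0 < b (n+2) * cfB a b (n+2)^2 / P (n+2) :=
      div_pos (mul_pos (hb _) (pow_pos (hB n).2 2)) (hP _)
    linarith)
  have hstep : ∀ n : ℕ, D n + D 0 * (1 / ((n:ℝ)+2)) ≤ D (n+2) := by
    intro n
    rw [hDs (n+1), hDs n]
    have h0 : D 0 ≤ D (n+1) := hDmono (Nat.zero_le _)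
    have hn : (0:ℝ) < (n:ℝ)+2 := by positivity
    have key : D (n+1) * (1 / ((n:ℝ)+2)) ≤
        b (n+2) * cfB a b (n+2)^2 / P (n+2) + b (n+1+2) * cfB a b (n+1+2)^2 / P (n+1+2) := by
      simp only [hD]
      rw [show n + 1 + 2 = n + 3 from rfl, show n + 1 + 1 = n + 2 from rfl,
        show P (n+3) = P (n+2) * a (n+3) from hPs (n+2)]
      have hX := (hB n).2
      have hY : 0 < cfB a b (n+3) := (hB (n+1)).2
      have hP2 := hP (n+2)
      have ha3 : 0 < a (n+3) := ha (n+2)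
      have hb2 : 0 < b (n+2) := hb (n+1)
      have hb3 : 0 < b (n+3) := hb (n+2)
      have hkn := hk n
      generalize cfB a b (n+2) = X at *
      generalize cfB a b (n+3) = Y at *
      generalize P (n+2) = p at *
      generalize a (n+3) = a3 at *
      generalize b (n+2) = b2 at *
      generalize b (n+3) = b3 at *
      generalize (n:ℝ)+2 = N at *
      have e1 : 1 / (4 * b2 * N^2) ≤ b3 / a3 := by
        rw [div_le_div_iff₀ (by positivity) ha3]; linarith
      have e2 : X * Y / N ≤ b2 * X^2 + Y^2 * (1 / (4 * b2 * N^2)) := by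
        have : b2 * X^2 + Y^2 * (1 / (4 * b2 * N^2)) - X * Y / N
            = (2 * b2 * N * X - Y)^2 / (4 * b2 * N^2) := by
          field_simp; ring
        have h : 0 ≤ (2 * b2 * N * X - Y)^2 / (4 * b2 * N^2) := by positivity
        linarith
      have e3 : Y^2 * (1 / (4 * b2 * N^2)) ≤ Y^2 * (b3 / a3) := by gcongr
      have e4 : X * Y / p * (1 / N) = (X * Y / N) / p := by field_simp
      have e5 : b2 * X^2 / p + b3 * Y^2 / (p * a3) = (b2 * X^2 + Y^2 * (b3 / a3)) / p := by
        field_simp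
      rw [e4, e5]
      gcongr
      linarith
    have : D 0 * (1 / ((n:ℝ)+2)) ≤ D (n+1) * (1 / ((n:ℝ)+2)) := by gcongr
    linarith
  have hG : ∀ n : ℕ, D 0 * ∑ i ∈ Finset.range n, (1 / ((i:ℝ)+2)) ≤ D n + D (n+1) := by
    intro n
    induction n with
    | zero => simp; linarith [hDpos 0, hDpos 1]
    | succ n ih =>
      rw [Finset.sum_range_succ, mul_add]
      have := hstep n
      rw [show n + 1 + 1 = n + 2 from rfl]
      linarith
  have hsum : Tendsto (fun n => ∑ i ∈ Finset.range n, (1 / ((i:ℝ)+2))) atTop atTop := by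
    have h := Real.tendsto_sum_range_one_div_nat_succ_atTop
    have h2 := (h.comp (tendsto_add_atTop_nat 1))
    have h3 := tendsto_atTop_add_const_right atTop (-1:ℝ) h2
    refine h3.congr (fun n => ?_)
    simp only [Function.comp]
    rw [Finset.sum_range_succ']
    simp only [Nat.cast_zero, zero_add, div_one, add_neg_cancel_right]
    refine Finset.sum_congr rfl (fun i _ => ?_)
    push_cast; ring
  have hDtop : Tendsto D atTop atTop := by
    have h1 := hsum.const_mul_atTop (hDpos 0)
    have h2 : Tendsto (fun n => D n + D (n+1)) atTop atTop := tendsto_atTop_mono hG h1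
    have h3 : Tendsto (fun n => (1/2:ℝ) * (D n + D (n+1))) atTop atTop :=
      h2.const_mul_atTop (by norm_num)
    have h4 : Tendsto (fun n => D (n+1)) atTop atTop := tendsto_atTop_mono (fun n => by
      have : D n ≤ D (n+1) := hDmono (Nat.le_succ n)
      linarith) h3
    exact (tendsto_add_atTop_iff_nat 1).1 h4
  have hanti : Antitone (fun n => (D n)⁻¹) := fun i j hij => by
    have := hDmono hij
    have := hDpos i
    simp only
    gcongr
  have hz : Tendsto (fun n => (D n)⁻¹) atTop (nhds 0) := tendsto_inv_atTop_zero.comp hDtop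
  obtain ⟨l, hl⟩ := hanti.tendsto_alternating_series_of_tendsto_zero hz
  have hl0 := hanti.alternating_series_le_tendsto hl 0
  simp at hl0
  have hf : ∀ n, cfA a b (n+1) / cfB a b (n+1) =
      b 0 + ∑ i ∈ Finset.range n, (-1)^i * (D i)⁻¹ := by
    intro n
    induction n with
    | zero => simp [cfA, cfB]
    | succ n ih =>
      rw [Finset.sum_range_succ, ← add_assoc, ← ih]
      have h1 := (hB n).1.ne'
      have h2 := (hB n).2.ne'
      have h3 := (hP (n+1)).ne'
      have hd := hdet n
      simp only [hD]
      rw [show n + 1 + 1 = n + 2 from rfl]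
      field_simp
      linear_combination hd
  refine ⟨b 0 + l, ⟨?_, ?_⟩, by linarith, fun n => (hB n).1⟩
  · filter_upwards [eventually_ge_atTop 1] with n hn
    obtain ⟨m, rfl⟩ : ∃ m, n = m + 1 := ⟨n - 1, by omega⟩
    exact (hB m).1.ne'
  · rw [← tendsto_add_atTop_iff_nat 1]
    exact (hl.const_add (b 0)).congr (fun n => (hf n).symm)

lemma aSeq_odd (α β : ℝ) (m : ℕ) : aSeq α β (2*m+1) =
    (2*(m:ℝ)+2-α)*(2*(m:ℝ)+2+α+β)*(2*(m:ℝ)+2-β)/4 := by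
  have : (2*m+1) % 2 ≠ 0 := by omega
  simp only [aSeq, this, if_false]
  push_cast; ring

lemma aSeq_even (α β : ℝ) (m : ℕ) : aSeq α β (2*m+2) =
    (2*(m:ℝ)+2+α)*(2*(m:ℝ)+2-α-β)*(2*(m:ℝ)+2+β)/4 := by
  have : (2*m+2) % 2 = 0 := by omega
  simp only [aSeq, this, if_true]
  push_cast; ring

lemma bSeq_odd (α β y : ℝ) (m : ℕ) : bSeq α β y (2*m+1) = 1 := by
  have : (2*m+1) % 2 ≠ 0 := by omega
  simp [bSeq, this]

lemma bSeq_even (α β y : ℝ) (m : ℕ) : bSeq α β y (2*m+2) = (y^2-1)*(2*(m:ℝ)+3) := by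
  have : (2*m+2) % 2 = 0 := by omega
  simp only [bSeq, this, if_true]
  rw [if_neg (by omega)]
  push_cast; ring

lemma stmt19_conv (α β : ℝ) (hα : 0 < α) (hβ : 0 < β) (hαβ : α + β < 2)
    (y : ℝ) (hy : 2 < y) :
    ∃ v, CFConvergesTo (aSeq α β) (bSeq α β y) v ∧ bSeq α β y 0 ≤ v ∧
      (∀ n, 0 < cfB (aSeq α β) (bSeq α β y) (n+1)) := by
  have hs : 3 < y^2-1 := by nlinarith
  apply cf_conv
  · intro n
    obtain ⟨m, rfl | rfl⟩ := Nat.even_or_odd' n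
    · rw [aSeq_odd]
      have hm : (0:ℝ) ≤ m := Nat.cast_nonneg m
      have h1 : 0 < 2*(m:ℝ)+2-α := by linarith
      have h2 : 0 < 2*(m:ℝ)+2-β := by linarith
      positivity
    · rw [show 2*m+1+1 = 2*m+2 from rfl, aSeq_even]
      have hm : (0:ℝ) ≤ m := Nat.cast_nonneg m
      have h1 : 0 < 2*(m:ℝ)+2-α-β := by linarith
      positivity
  · intro n
    obtain ⟨m, rfl | rfl⟩ := Nat.even_or_odd' n
    · rw [bSeq_odd]; norm_num
    · rw [show 2*m+1+1 = 2*m+2 from rfl, bSeq_even]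
      have : 0 < y^2-1 := by linarith
      positivity
  · intro n
    obtain ⟨m, rfl | rfl⟩ := Nat.even_or_odd' n
    · rw [show 2*m+3 = 2*(m+1)+1 from by ring, aSeq_odd, bSeq_odd, bSeq_even]
      have hm : (0:ℝ) ≤ m := Nat.cast_nonneg m
      push_cast
      generalize (m:ℝ) = t at *
      have h1 : (2*(t+1)+2-α)*(2*(t+1)+2+α+β) ≤ (2*t+4)*(2*t+6) :=
        mul_le_mul (by linarith) (by linarith) (by linarith) (by linarith)
      have h2 : (2*(t+1)+2-α)*(2*(t+1)+2+α+β)*(2*(t+1)+2-β) ≤ (2*t+4)*(2*t+6)*(2*t+4) :=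
        mul_le_mul h1 (by linarith) (by linarith) (by positivity)
      have h3 : 3*((2*t+3)*(2*t+2)^2) ≤ (y^2-1)*((2*t+3)*(2*t+2)^2) := by gcongr
      have h4 : (2*t+4)*(2*t+6)*(2*t+4)/4 ≤ 4*(3*((2*t+3)*(2*t+2)^2)) := by
        nlinarith [pow_nonneg hm 2, pow_nonneg hm 3]
      linarith
    · rw [show 2*m+1+3 = 2*(m+1)+2 from by ring, show 2*m+1+2 = 2*(m+1)+1 from by ring,
        aSeq_even, bSeq_odd, bSeq_even]
      have hm : (0:ℝ) ≤ m := Nat.cast_nonneg m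
      push_cast
      generalize (m:ℝ) = t at *
      have h1 : (2*(t+1)+2+α)*(2*(t+1)+2-α-β) ≤ (2*t+6)*(2*t+4) :=
        mul_le_mul (by linarith) (by linarith) (by linarith) (by linarith)
      have h2 : (2*(t+1)+2+α)*(2*(t+1)+2-α-β)*(2*(t+1)+2+β) ≤ (2*t+6)*(2*t+4)*(2*t+6) :=
        mul_le_mul h1 (by linarith) (by linarith) (by positivity)
      have h3 : 3*((2*(t+1)+3)*(2*t+1+2)^2) ≤ (y^2-1)*((2*(t+1)+3)*(2*t+1+2)^2) := by gcongr
      have h4 : (2*t+6)*(2*t+4)*(2*t+6)/4 ≤ 4*(3*((2*(t+1)+3)*(2*t+1+2)^2)) := by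
        nlinarith [pow_nonneg hm 2, pow_nonneg hm 3]
      linarith

/-- The weight of the Bauer-Muir type transformation. -/
noncomputable def wT (α β y m : ℝ) : ℝ :=
  (y+1)*(y^2-2*y+5-(α^2+α*β+β^2))/4 + α*β*(α+β)/4 - (y+1)*(y-3)*m + 2*(y+1)*m^2

lemma wT_pos (α β y m : ℝ) (hα : 0 < α) (hβ : 0 < β) (hαβ : α + β < 2) (hy : 2 < y) :
    0 < wT α β y m := by
  have h : wT α β y m = (y+1) * (2*(m-(y-3)/4)^2 + ((y+1)^2-2*(α^2+α*β+β^2))/8)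
      + α*β*(α+β)/4 := by
    unfold wT; ring
  have h1 : 0 < (y+1)^2-2*(α^2+α*β+β^2) := by
    nlinarith [mul_pos hα hβ]
  have : 0 < y + 1 := by linarith
  rw [h]; positivity

/-- The transformation intertwines the recurrences with parameters `y` and `y+2`. -/
lemma intertwine (α β y : ℝ) (u v : ℕ → ℝ)
    (hu : ∀ n, u (n+2) = bSeq α β y (n+1) * u (n+1) + aSeq α β (n+1) * u n)
    (hv : ∀ n, v (n+2) = bSeq α β (y+2) (n+1) * v (n+1) + aSeq α β (n+1) * v n)
    (h0 : v 0 = u 1 + wT α β y 0 * u 0)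
    (h1 : v 1 = ((y^2-1)*3 - α*β*(α+β)/2 + wT α β y 1) * u 1
      + aSeq α β 1 * ((y^2-1)*3 + wT α β y 1 - wT α β y 0) * u 0) (m : ℕ) :
    v (2*m) = u (2*m+1) + wT α β y m * u (2*m) ∧
    v (2*m+1) = ((y^2-1)*(2*m+3) - α*β*(α+β)/2 + wT α β y (m+1)) * u (2*m+1)
      + aSeq α β (2*m+1) * ((y^2-1)*(2*m+3) + wT α β y (m+1) - wT α β y m) * u (2*m) := by
  induction m with
  | zero => simpa using ⟨h0, h1⟩
  | succ m ih =>
    obtain ⟨i0, i1⟩ := ih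
    have hu2 := hu (2*m)
    have hu3 := hu (2*m+1)
    have hv2 := hv (2*m)
    have hv3 := hv (2*m+1)
    rw [show 2*m+1+1 = 2*m+2 from rfl] at hu3 hv3
    rw [show 2*(m+1) = 2*m+2 from by ring, show 2*m+2+1 = 2*m+1+2 from rfl,
      hv3, hu3, hv2, hu2, i0, i1, show 2*m+1+2 = 2*(m+1)+1 from by ring]
    simp only [aSeq_odd, aSeq_even, bSeq_odd, bSeq_even, wT]
    push_cast
    constructor <;> ring

theorem stmt19 (α β : ℝ) (hα : 0 < α) (hβ : 0 < β) (hαβ : α + β < 2)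
    (x : ℝ) (hx : 2 < x) :
    ∃ F1 F2 : ℝ, CFConvergesTo (aSeq α β) (bSeq α β x) F1 ∧
      CFConvergesTo (aSeq α β) (bSeq α β (x + 2)) F2 ∧
      F1 + α * β * (α + β) / 4 ≠ 0 ∧ F2 + α * β * (α + β) / 4 ≠ 0 ∧
      (F1 - α * β * (α + β) / 4) / (F1 + α * β * (α + β) / 4) =
        ((x + 1 + α) * (x + 1 - α - β) * (x + 1 + β) /
            ((x + 1 - α) * (x + 1 + α + β) * (x + 1 - β))) *
          ((F2 - α * β * (α + β) / 4) / (F2 + α * β * (α + β) / 4)) := by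
  obtain ⟨F1, hc1, hl1, hB1⟩ := stmt19_conv α β hα hβ hαβ x hx
  obtain ⟨F2, hc2, hl2, hB2⟩ := stmt19_conv α β hα hβ hαβ (x+2) (by linarith)
  have hn1 : F1 + α * β * (α + β) / 4 ≠ 0 := by
    simp only [bSeq, if_true] at hl1
    nlinarith
  have hn2 : F2 + α * β * (α + β) / 4 ≠ 0 := by
    simp only [bSeq, if_true] at hl2
    nlinarith
  refine ⟨F1, F2, hc1, hc2, hn1, hn2, ?_⟩
  set κ : ℝ := ((x+1)^3 - (α^2+α*β+β^2)*(x+1))/4 with hκ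
  set σ : ℝ := α * β * (α + β) / 4 with hσ
  have ha1 : aSeq α β 1 = (2-α)*(2+α+β)*(2-β)/4 := by
    have := aSeq_odd α β 0
    simpa using this
  have hb1 : ∀ y, bSeq α β y 1 = 1 := fun y => bSeq_odd α β y 0
  have hb0 : ∀ y, bSeq α β y 0 = y^2-1-α*β*(α+β)/4 := fun y => by simp [bSeq]
  have hA := fun m => (intertwine α β x (cfA (aSeq α β) (bSeq α β x))
    (fun n => κ * cfA (aSeq α β) (bSeq α β (x+2)) n + σ^2 * cfB (aSeq α β) (bSeq α β (x+2)) n)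
    (fun n => by rw [cfA]) (fun n => by simp only [cfA, cfB]; ring)
    (by simp only [cfA, cfB, hb0, wT, hκ, hσ]; ring)
    (by simp only [cfA, cfB, hb0, ha1, wT, hκ, hσ]; ring) m).1
  have hB := fun m => (intertwine α β x (cfB (aSeq α β) (bSeq α β x))
    (fun n => cfA (aSeq α β) (bSeq α β (x+2)) n + κ * cfB (aSeq α β) (bSeq α β (x+2)) n)
    (fun n => by rw [cfB]) (fun n => by simp only [cfA, cfB]; ring)
    (by simp only [cfA, cfB]; ring)
    (by simp only [cfA, cfB, hb0, wT, hκ]; ring) m).1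
  have t2m : Tendsto (fun m : ℕ => 2*(m+1)) atTop atTop :=
    tendsto_atTop_mono (fun m => by simp only [id]; omega) tendsto_id
  have t2m1 : Tendsto (fun m : ℕ => 2*(m+1)+1) atTop atTop :=
    tendsto_atTop_mono (fun m => by simp only [id]; omega) tendsto_id
  have f2 := hc2.2.comp t2m
  have f1 := hc1.2.comp t2m
  have f1' := hc1.2.comp t2m1
  simp only [Function.comp_def] at f1 f1' f2
  have hq : Tendsto (fun m : ℕ =>
      (cfA (aSeq α β) (bSeq α β x) (2*(m+1)+1)
        + wT α β x ((m+1 : ℕ):ℝ) * cfA (aSeq α β) (bSeq α β x) (2*(m+1))) /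
      (cfB (aSeq α β) (bSeq α β x) (2*(m+1)+1)
        + wT α β x ((m+1 : ℕ):ℝ) * cfB (aSeq α β) (bSeq α β x) (2*(m+1)))) atTop (nhds F1) := by
    have hmin := f1.min f1'
    have hmax := f1.max f1'
    rw [min_self] at hmin
    rw [max_self] at hmax
    refine tendsto_of_tendsto_of_tendsto_of_le_of_le hmin hmax (fun m => ?_) (fun m => ?_)
    · have p1 := hB1 (2*(m+1))
      have p2 : 0 < cfB (aSeq α β) (bSeq α β x) (2*(m+1)) := hB1 (2*m+1)
      have w := wT_pos α β x ((m+1 : ℕ):ℝ) hα hβ hαβ hx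
      simp only
      rw [le_div_iff₀ (by positivity), mul_add]
      refine add_le_add ?_ ?_
      · rw [← le_div_iff₀ p1]; exact min_le_right _ _
      · rw [← mul_assoc, mul_comm _ (wT _ _ _ _), mul_assoc]
        refine mul_le_mul_of_nonneg_left ?_ w.le
        rw [← le_div_iff₀ p2]; exact min_le_left _ _
    · have p1 := hB1 (2*(m+1))
      have p2 : 0 < cfB (aSeq α β) (bSeq α β x) (2*(m+1)) := hB1 (2*m+1)
      have w := wT_pos α β x ((m+1 : ℕ):ℝ) hα hβ hαβ hx
      simp only
      rw [div_le_iff₀ (by positivity)]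
      refine le_trans (add_le_add ?_ ?_) (mul_add _ _ _).ge
      · rw [← div_le_iff₀ p1]; exact le_max_right _ _
      · rw [← mul_assoc, mul_comm _ (wT _ _ _ _), mul_assoc]
        refine mul_le_mul_of_nonneg_left ?_ w.le
        rw [← div_le_iff₀ p2]; exact le_max_left _ _
  have hL := hq.mul (f2.add_const κ)
  have hR := (f2.const_mul κ).add_const (σ^2)
  have hEq : F1 * (F2 + κ) = κ * F2 + σ^2 := by
    refine tendsto_nhds_unique hL (hR.congr (fun m => ?_))
    have p1 := hB1 (2*(m+1))
    have p2 : 0 < cfB (aSeq α β) (bSeq α β x) (2*(m+1)) := hB1 (2*m+1)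
    have p3 : 0 < cfB (aSeq α β) (bSeq α β (x+2)) (2*(m+1)) := hB2 (2*m+1)
    have w := wT_pos α β x ((m+1 : ℕ):ℝ) hα hβ hαβ hx
    have p4 : 0 < cfB (aSeq α β) (bSeq α β x) (2*(m+1)+1)
        + wT α β x ((m+1 : ℕ):ℝ) * cfB (aSeq α β) (bSeq α β x) (2*(m+1)) := by positivity
    rw [← hB (m+1)] at p4
    rw [← hA (m+1), ← hB (m+1)]
    have p3' := p3.ne'
    have p4' := p4.ne'
    field_simp
  have d1 : x + 1 - α ≠ 0 := by linarith
  have d2 : x + 1 + α + β ≠ 0 := by linarith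
  have d3 : x + 1 - β ≠ 0 := by linarith
  rw [div_mul_div_comm, div_eq_div_iff hn1 (by positivity)]
  have g1 : (x + 1 + α) * (x + 1 - α - β) * (x + 1 + β) = 4*κ - 4*σ := by
    rw [hκ, hσ]; ring
  have g2 : (x + 1 - α) * (x + 1 + α + β) * (x + 1 - β) = 4*κ + 4*σ := by
    rw [hκ, hσ]; ring
  rw [g1, g2]
  linear_combination 8 * σ * hEq
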